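/- Let Ω be an open subset of ℝⁿ, let f = (u₁, v₁) and g = (u₂, v₂) be H-continuous pairs on Ω, and let (f_k) and (g_k) be order-Cauchy sequences of continuous real functions on Ω which order converge to f and to g respectively. Then the sequence (f_k + g_k) order converges to f ⊕ g, the unique H-continuous pair (p_l, p_u) with u₁(x) + u₂(x) ≤ p_l(x) ≤ p_u(x) ≤ v₁(x) + v₂(x) for all x ∈ Ω. -/

import Mathlib

open Set

/-- Points of `ℝⁿ`. -/
abbrev Pt (n : ℕ) := EuclideanSpace ℝ (Fin n)

/-- Lower Baire operator `I(D,Ω,f)(x) = sup_{δ>0} inf { f y : y ∈ B_δ(x) ∩ D }`,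
where `B_δ(x) = { y ∈ Ω : ‖y - x‖ < δ }`. -/
noncomputable def Ilow {n : ℕ} (D Om : Set (Pt n)) (f : Pt n → ℝ) (x : Pt n) : ℝ :=
  sSup {a : ℝ | ∃ δ : ℝ, 0 < δ ∧
    a = sInf (f '' {y | y ∈ Om ∧ ‖y - x‖ < δ ∧ y ∈ D})}

/-- Upper Baire operator `S(D,Ω,f)(x) = inf_{δ>0} sup { f y : y ∈ B_δ(x) ∩ D }`. -/
noncomputable def Shigh {n : ℕ} (D Om : Set (Pt n)) (f : Pt n → ℝ) (x : Pt n) : ℝ :=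
  sInf {a : ℝ | ∃ δ : ℝ, 0 < δ ∧
    a = sSup (f '' {y | y ∈ Om ∧ ‖y - x‖ < δ ∧ y ∈ D})}

/-- `f`, defined on `D ⊆ Ω`, is locally bounded relative to `Ω`. -/
def LocBddOn {n : ℕ} (Om D : Set (Pt n)) (f : Pt n → ℝ) : Prop :=
  ∀ x ∈ Om, ∃ δ : ℝ, 0 < δ ∧ ∃ M : ℝ,
    ∀ y, y ∈ Om → ‖y - x‖ < δ → y ∈ D → |f y| < M

/-- `(u, v)` encodes an interval-valued function `x ↦ [u x, v x]` on `Om`. -/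
def IntervalPair {n : ℕ} (Om : Set (Pt n)) (u v : Pt n → ℝ) : Prop :=
  LocBddOn Om Om u ∧ LocBddOn Om Om v ∧ ∀ x ∈ Om, u x ≤ v x

/-- The pair `(u, v)` is S-continuous on `Om`: `I(u) = u` and `S(v) = v`. -/
def SCont {n : ℕ} (Om : Set (Pt n)) (u v : Pt n → ℝ) : Prop :=
  ∀ x ∈ Om, Ilow Om Om u x = u x ∧ Shigh Om Om v x = v x

/-- The pair `(u, v)` is Hausdorff continuous on `Om`. -/
def HCont {n : ℕ} (Om : Set (Pt n)) (u v : Pt n → ℝ) : Prop :=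
  ∀ p q : Pt n → ℝ, LocBddOn Om Om p → LocBddOn Om Om q →
    (∀ x ∈ Om, u x ≤ p x ∧ p x ≤ q x ∧ q x ≤ v x) →
    ∀ x ∈ Om, Ilow Om Om p x = u x ∧ Shigh Om Om q x = v x

/-- `(u, v)` is an H-continuous interval pair on `Om`. -/
def HContPair {n : ℕ} (Om : Set (Pt n)) (u v : Pt n → ℝ) : Prop :=
  IntervalPair Om u v ∧ HCont Om u v

/-- Lower endpoint of the pointwise interval product. -/
noncomputable def imin {n : ℕ} (u₁ v₁ u₂ v₂ : Pt n → ℝ) (x : Pt n) : ℝ :=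
  min (min (u₁ x * u₂ x) (u₁ x * v₂ x)) (min (v₁ x * u₂ x) (v₁ x * v₂ x))

/-- Upper endpoint of the pointwise interval product. -/
noncomputable def imax {n : ℕ} (u₁ v₁ u₂ v₂ : Pt n → ℝ) (x : Pt n) : ℝ :=
  max (max (u₁ x * u₂ x) (u₁ x * v₂ x)) (max (v₁ x * u₂ x) (v₁ x * v₂ x))

/-- `(pl, pu)` is the H-continuous pair contained pointwise in the interval sum of
`(u₁, v₁)` and `(u₂, v₂)`, i.e. `(pl, pu) = (u₁,v₁) ⊕ (u₂,v₂)`. -/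
def IsOplus {n : ℕ} (Om : Set (Pt n)) (u₁ v₁ u₂ v₂ pl pu : Pt n → ℝ) : Prop :=
  HContPair Om pl pu ∧
    ∀ x ∈ Om, u₁ x + u₂ x ≤ pl x ∧ pl x ≤ pu x ∧ pu x ≤ v₁ x + v₂ x

/-- `(ql, qu)` is the H-continuous pair contained pointwise in the interval product of
`(u₁, v₁)` and `(u₂, v₂)`, i.e. `(ql, qu) = (u₁,v₁) ⊗ (u₂,v₂)`. -/
def IsOtimes {n : ℕ} (Om : Set (Pt n)) (u₁ v₁ u₂ v₂ ql qu : Pt n → ℝ) : Prop :=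
  HContPair Om ql qu ∧
    ∀ x ∈ Om, imin u₁ v₁ u₂ v₂ x ≤ ql x ∧ ql x ≤ qu x ∧ qu x ≤ imax u₁ v₁ u₂ v₂ x

/-- Pointwise order on interval pairs, restricted to `Om`. -/
def PairLe {n : ℕ} (Om : Set (Pt n)) (p q : (Pt n → ℝ) × (Pt n → ℝ)) : Prop :=
  ∀ x ∈ Om, p.1 x ≤ q.1 x ∧ p.2 x ≤ q.2 x

/-- The sequence `F` of (H-continuous) pairs order converges to the H-continuous pair `p`:
there are an increasing sequence `a` and a decreasing sequence `b` of H-continuous pairs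
with `a k ≤ F k ≤ b k`, such that `p` is a least upper bound of the `a k` and a greatest
lower bound of the `b k` within the H-continuous pairs on `Om`. -/
def OrderConvH {n : ℕ} (Om : Set (Pt n)) (F : ℕ → (Pt n → ℝ) × (Pt n → ℝ))
    (p : (Pt n → ℝ) × (Pt n → ℝ)) : Prop :=
  ∃ a b : ℕ → (Pt n → ℝ) × (Pt n → ℝ),
    (∀ k, HContPair Om (a k).1 (a k).2) ∧
    (∀ k, HContPair Om (b k).1 (b k).2) ∧
    (∀ k, PairLe Om (a k) (a (k + 1))) ∧
    (∀ k, PairLe Om (b (k + 1)) (b k)) ∧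
    (∀ k, PairLe Om (a k) (F k) ∧ PairLe Om (F k) (b k)) ∧
    (∀ k, PairLe Om (a k) p) ∧
    (∀ w : (Pt n → ℝ) × (Pt n → ℝ), HContPair Om w.1 w.2 →
      (∀ k, PairLe Om (a k) w) → PairLe Om p w) ∧
    (∀ k, PairLe Om p (b k)) ∧
    (∀ w : (Pt n → ℝ) × (Pt n → ℝ), HContPair Om w.1 w.2 →
      (∀ k, PairLe Om w (b k)) → PairLe Om w p)

/-- The sequence `f` of continuous real functions on `Om` is order-Cauchy: there is a
decreasing sequence `β` of continuous functions on `Om` whose greatest lower bound (in the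
pointwise order on continuous functions on `Om`) is the zero function, with
`f m - f j ≤ β k` on `Om` whenever `m, j ≥ k`. -/
def OrderCauchySeq {n : ℕ} (Om : Set (Pt n)) (f : ℕ → Pt n → ℝ) : Prop :=
  ∃ β : ℕ → Pt n → ℝ,
    (∀ k, ContinuousOn (β k) Om) ∧
    (∀ k, ∀ x ∈ Om, β (k + 1) x ≤ β k x) ∧
    (∀ k, ∀ x ∈ Om, 0 ≤ β k x) ∧
    (∀ g : Pt n → ℝ, ContinuousOn g Om → (∀ k, ∀ x ∈ Om, g x ≤ β k x) →
      ∀ x ∈ Om, g x ≤ 0) ∧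
    (∀ k m j : ℕ, k ≤ m → k ≤ j → ∀ x ∈ Om, f m x - f j x ≤ β k x)

/-! The Hausdorff continuous interval functions on a topological space form an ordered abelian group
under `⊕`. Indeed the width of such a function is smaller than any `ε > 0` on a dense open set, so a
pointwise sum of several of them, although in general not Hausdorff continuous, is still narrow in
this sense, and a narrow interval function contains exactly one Hausdorff continuous function. This
uniqueness yields all the axioms, the compatibility with the order included. In any ordered abelian
group the supremum of the sum of two increasing sequences is the sum of the suprema, so order
convergence is additive.

The H-continuous pairs on `Om` are, up to their values outside `Om`, the Hausdorff continuous
functions on the subspace `Om` which are bounded on bounded sets. Local boundedness is not enough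
because a real supremum over an unbounded set has the junk value `0`. -/

open Filter Topology Bornology Metric
open scoped Pointwise

section OrderConvergence

variable {ι α : Type*} [Preorder ι]

/-- Order convergence of a net `F` to `p` in a preorder `α`: `F` is squeezed between an increasing
net with supremum `p` and a decreasing net with infimum `p`. -/
def OrderConverges [Preorder α] (F : ι → α) (p : α) : Prop :=
  ∃ a b : ι → α, Monotone a ∧ Antitone b ∧ (∀ i, a i ≤ F i ∧ F i ≤ b i) ∧
    IsLUB (range a) p ∧ IsGLB (range b) p

variable [IsDirectedOrder ι] [AddCommGroup α] [PartialOrder α] [IsOrderedAddMonoid α] {p q : α}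

theorem isLUB_range_add_of_monotone {a b : ι → α} (ha : Monotone a) (hb : Monotone b)
    (hp : IsLUB (range a) p) (hq : IsLUB (range b) q) : IsLUB (range (a + b)) (p + q) := by
  refine (isLUB_congr (Subset.antisymm ?_ ?_)).mp (hp.add hq)
  · rintro w hw _ ⟨i, rfl⟩
    exact hw (add_mem_add (mem_range_self i) (mem_range_self i))
  · rintro w hw _ ⟨_, ⟨i, rfl⟩, _, ⟨j, rfl⟩, rfl⟩
    obtain ⟨k, hik, hjk⟩ := exists_ge_ge i j
    exact (add_le_add (ha hik) (hb hjk)).trans (hw (mem_range_self k))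

theorem isGLB_range_add_of_antitone {a b : ι → α} (ha : Antitone a) (hb : Antitone b)
    (hp : IsGLB (range a) p) (hq : IsGLB (range b) q) : IsGLB (range (a + b)) (p + q) :=
  isLUB_range_add_of_monotone (α := αᵒᵈ) ha hb hp hq

theorem OrderConverges.add {F G : ι → α} (hF : OrderConverges F p) (hG : OrderConverges G q) :
    OrderConverges (F + G) (p + q) := by
  obtain ⟨a, b, ha, hb, hab, hpa, hpb⟩ := hF
  obtain ⟨a', b', ha', hb', hab', hqa, hqb⟩ := hG
  exact ⟨a + a', b + b', ha.add ha', hb.add hb',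
    fun i => ⟨add_le_add (hab i).1 (hab' i).1, add_le_add (hab i).2 (hab' i).2⟩,
    isLUB_range_add_of_monotone ha ha' hpa hqa, isGLB_range_add_of_antitone hb hb' hpb hqb⟩

end OrderConvergence

section Envelopes

variable {X γ : Type*} [TopologicalSpace X] [ConditionallyCompleteLinearOrder γ] {f : X → γ}

theorem isCoboundedUnder_le_nhds (f : X → γ) (x : X) : IsCoboundedUnder (· ≤ ·) (𝓝 x) f :=
  IsCoboundedUnder.of_frequently_ge (a := f x) fun h => h.self_of_nhds le_rfl

theorem isCoboundedUnder_ge_nhds (f : X → γ) (x : X) : IsCoboundedUnder (· ≥ ·) (𝓝 x) f :=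
  isCoboundedUnder_le_nhds (γ := γᵒᵈ) f x

theorem le_limsup_nhds {x : X} (hf : IsBoundedUnder (· ≤ ·) (𝓝 x) f) : f x ≤ limsup f (𝓝 x) :=
  le_limsup_of_frequently_le (fun h => h.self_of_nhds le_rfl) hf

theorem liminf_nhds_le {x : X} (hf : IsBoundedUnder (· ≥ ·) (𝓝 x) f) : liminf f (𝓝 x) ≤ f x :=
  le_limsup_nhds (γ := γᵒᵈ) hf

theorem upperSemicontinuous_limsup_nhds [DenselyOrdered γ]
    (hf : ∀ x, IsBoundedUnder (· ≤ ·) (𝓝 x) f) :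
    UpperSemicontinuous fun x => limsup f (𝓝 x) := by
  intro x c hc
  obtain ⟨d, hd, hdc⟩ := exists_between hc
  filter_upwards [eventually_eventually_nhds.mpr (eventually_lt_of_limsup_lt hd (hf x))] with y hy
  exact (limsup_le_of_le (isCoboundedUnder_le_nhds f y) (hy.mono fun _ => le_of_lt)).trans_lt hdc

theorem lowerSemicontinuous_liminf_nhds [DenselyOrdered γ]
    (hf : ∀ x, IsBoundedUnder (· ≥ ·) (𝓝 x) f) :
    LowerSemicontinuous fun x => liminf f (𝓝 x) :=
  upperSemicontinuous_limsup_nhds (γ := γᵒᵈ) hf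

end Envelopes

/-- A Hausdorff continuous interval function `x ↦ [lower x, upper x]` on a topological space. The
last two fields say that `upper` is the upper envelope of `lower` and `lower` the lower envelope of
`upper`; they are phrased with `∃ᶠ` so as not to depend on junk values of `limsup` and `liminf`. -/
@[ext]
structure HausdorffFun (X : Type*) [TopologicalSpace X] where
  lower : X → ℝ
  upper : X → ℝ
  lower_le_upper : lower ≤ upper
  lowerSemicontinuous_lower : LowerSemicontinuous lower
  upperSemicontinuous_upper : UpperSemicontinuous upper
  frequently_lt_lower : ∀ {x c}, c < upper x → ∃ᶠ y in 𝓝 x, c < lower y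
  frequently_upper_lt : ∀ {x c}, lower x < c → ∃ᶠ y in 𝓝 x, upper y < c

/-- The interval function `x ↦ [w x, z x]` is semicontinuous and has arbitrarily small width on
dense sets. Unlike Hausdorff continuity, this is stable under pointwise sums. -/
structure IsNarrow {X : Type*} [TopologicalSpace X] (w z : X → ℝ) : Prop where
  lowerSemicontinuous : LowerSemicontinuous w
  upperSemicontinuous : UpperSemicontinuous z
  dense : ∀ ε > 0, Dense {x | z x < w x + ε}

namespace IsNarrow

variable {X : Type*} [TopologicalSpace X] {w z w' z' : X → ℝ}

theorem isOpen_width_lt (h : IsNarrow w z) (ε : ℝ) : IsOpen {x | z x < w x + ε} := by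
  have hsub : UpperSemicontinuous (fun x => z x + -w x) := h.upperSemicontinuous.add
    (continuous_neg.comp_lowerSemicontinuous_antitone h.lowerSemicontinuous (fun _ _ => neg_le_neg))
  simpa only [preimage, mem_Iio, ← sub_eq_add_neg, sub_lt_iff_lt_add'] using hsub.isOpen_preimage ε

theorem neg (h : IsNarrow w z) : IsNarrow (-z) (-w) where
  lowerSemicontinuous :=
    continuous_neg.comp_upperSemicontinuous_antitone h.upperSemicontinuous (fun _ _ => neg_le_neg)
  upperSemicontinuous :=
    continuous_neg.comp_lowerSemicontinuous_antitone h.lowerSemicontinuous (fun _ _ => neg_le_neg)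
  dense ε hε := (h.dense ε hε).mono fun x (hx : z x < w x + ε) =>
    show -w x < -z x + ε by linarith

theorem add (h : IsNarrow w z) (h' : IsNarrow w' z') : IsNarrow (w + w') (z + z') where
  lowerSemicontinuous := h.lowerSemicontinuous.add h'.lowerSemicontinuous
  upperSemicontinuous := h.upperSemicontinuous.add h'.upperSemicontinuous
  dense ε hε := by
    refine ((h.dense _ (half_pos hε)).inter_of_isOpen_left (h'.dense _ (half_pos hε))
      (h.isOpen_width_lt _)).mono fun x hx => ?_
    have hw : z x < w x + ε / 2 := hx.1
    have hw' : z' x < w' x + ε / 2 := hx.2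
    change z x + z' x < w x + w' x + ε
    linarith

end IsNarrow

namespace HausdorffFun

variable {X : Type*} [TopologicalSpace X]

theorem exists_between {w z : X → ℝ} (hw : LowerSemicontinuous w) (hz : UpperSemicontinuous z)
    (hwz : w ≤ z) : ∃ F : HausdorffFun X, w ≤ F.lower ∧ F.upper ≤ z := by
  have hw_bdd (x : X) : IsBoundedUnder (· ≤ ·) (𝓝 x) w :=
    ⟨z x + 1, eventually_map.mpr <|
      (hz x _ (lt_add_one _)).mono fun y hy => (hwz y).trans (le_of_lt hy)⟩
  set s : X → ℝ := fun x => limsup w (𝓝 x)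
  have hws : w ≤ s := fun x => le_limsup_nhds (hw_bdd x)
  have hsz : s ≤ z := fun x => le_of_forall_gt_imp_ge_of_dense fun c hc =>
    limsup_le_of_le (isCoboundedUnder_le_nhds w x)
      ((hz x c hc).mono fun y hy => (hwz y).trans (le_of_lt hy))
  have hs_bdd (x : X) : IsBoundedUnder (· ≥ ·) (𝓝 x) s :=
    ⟨w x - 1, eventually_map.mpr <|
      (hw x _ (sub_one_lt _)).mono fun y hy => (le_of_lt hy).trans (hws y)⟩
  have hwt : w ≤ fun x => liminf s (𝓝 x) := fun x => le_of_forall_lt_imp_le_of_dense fun c hc =>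
    le_liminf_of_le (isCoboundedUnder_ge_nhds s x)
      ((hw x c hc).mono fun y hy => (le_of_lt hy).trans (hws y))
  exact ⟨{
    lower := fun x => liminf s (𝓝 x)
    upper := s
    lower_le_upper := fun x => liminf_nhds_le (hs_bdd x)
    lowerSemicontinuous_lower := lowerSemicontinuous_liminf_nhds hs_bdd
    upperSemicontinuous_upper := upperSemicontinuous_limsup_nhds hw_bdd
    frequently_lt_lower := fun {x c} hc =>
      (frequently_lt_of_lt_limsup (isCoboundedUnder_le_nhds w x) hc).mono
        fun y hy => hy.trans_le (hwt y)
    frequently_upper_lt := fun {x c} hc =>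
      frequently_lt_of_liminf_lt (isCoboundedUnder_ge_nhds s x) hc }, hwt, hsz⟩

theorem upper_le_of_forall_lower_le (F : HausdorffFun X) {V : Set X} (hV : IsOpen V) {M : ℝ}
    (hM : ∀ y ∈ V, F.lower y ≤ M) {x : X} (hx : x ∈ V) : F.upper x ≤ M := by
  by_contra! hlt
  obtain ⟨y, hy, hyV⟩ := ((F.frequently_lt_lower hlt).and_eventually (hV.mem_nhds hx)).exists
  exact (hM y hyV).not_gt hy

theorem isNarrow (F : HausdorffFun X) : IsNarrow F.lower F.upper where
  lowerSemicontinuous := F.lowerSemicontinuous_lower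
  upperSemicontinuous := F.upperSemicontinuous_upper
  dense ε hε := by
    refine fun x => mem_closure_iff_frequently.mpr fun hwide => ?_
    obtain ⟨V, hV, hVo, hxV⟩ := eventually_nhds_iff.mp
      (hwide.and (F.upperSemicontinuous_upper x _ (lt_add_one _)))
    have hwide (y) (hy : y ∈ V) : F.lower y + ε ≤ F.upper y := not_lt.mp (hV y hy).1
    have hbdd : BddAbove (F.lower '' V) := ⟨F.upper x + 1,
      forall_mem_image.mpr fun y hy => (F.lower_le_upper y).trans (le_of_lt (hV y hy).2)⟩
    have hupper (y) (hy : y ∈ V) : F.upper y ≤ sSup (F.lower '' V) :=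
      F.upper_le_of_forall_lower_le hVo (fun z hz => le_csSup hbdd (mem_image_of_mem _ hz)) hy
    have hsup : sSup (F.lower '' V) ≤ sSup (F.lower '' V) - ε :=
      csSup_le ⟨_, mem_image_of_mem _ hxV⟩
        (forall_mem_image.mpr fun y hy => by linarith [hwide y hy, hupper y hy])
    linarith

instance : PartialOrder (HausdorffFun X) :=
  PartialOrder.lift (fun F => (F.lower, F.upper)) fun F G h => by
    obtain ⟨hl, hu⟩ := Prod.mk.inj h
    exact HausdorffFun.ext hl hu

theorem le_iff_lower_le_upper {F G : HausdorffFun X} : F ≤ G ↔ F.lower ≤ G.upper := by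
  refine ⟨fun h => h.1.trans G.lower_le_upper, fun h => ⟨fun x => ?_, fun x => ?_⟩⟩
  · by_contra! hlt
    obtain ⟨c, hGc, hcF⟩ := _root_.exists_between hlt
    obtain ⟨y, hGy, hFy⟩ := ((G.frequently_upper_lt hGc).and_eventually
      (F.lowerSemicontinuous_lower x c hcF)).exists
    exact (hGy.trans hFy).not_ge (h y)
  · by_contra! hlt
    obtain ⟨c, hGc, hcF⟩ := _root_.exists_between hlt
    obtain ⟨y, hFy, hGy⟩ := ((F.frequently_lt_lower hcF).and_eventually
      (G.upperSemicontinuous_upper x c hGc)).exists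
    exact (hGy.trans hFy).not_ge (h y)

theorem le_of_isNarrow {F G : HausdorffFun X} {w z : X → ℝ} (h : IsNarrow w z)
    (hF : F.upper ≤ z) (hG : w ≤ G.lower) : F ≤ G := by
  refine le_iff_lower_le_upper.mpr fun x => ?_
  by_contra! hlt
  obtain ⟨ε, hε, hεlt⟩ : ∃ ε > 0, G.upper x + ε < F.lower x - ε :=
    ⟨(F.lower x - G.upper x) / 3, by linarith, by linarith⟩
  obtain ⟨y, hy, hFy, hGy⟩ := ((mem_closure_iff_frequently.mp (h.dense ε hε x)).and_eventually
    ((F.lowerSemicontinuous_lower x _ (sub_lt_self _ (half_pos hε))).and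
      (G.upperSemicontinuous_upper x _ (lt_add_of_pos_right _ (half_pos hε))))).exists
  have hy : z y < w y + ε := hy
  linarith [F.lower_le_upper y, hF y, hG y, G.lower_le_upper y]

theorem eq_of_isNarrow {F G : HausdorffFun X} {w z : X → ℝ} (h : IsNarrow w z)
    (hwF : w ≤ F.lower) (hFz : F.upper ≤ z) (hwG : w ≤ G.lower) (hGz : G.upper ≤ z) : F = G :=
  le_antisymm (le_of_isNarrow h hFz hwG) (le_of_isNarrow h hGz hwF)

/-- The point-valued interval function `x ↦ [f x, f x]`. -/
def ofContinuous (f : C(X, ℝ)) : HausdorffFun X where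
  lower := f
  upper := f
  lower_le_upper := le_rfl
  lowerSemicontinuous_lower := f.continuous.lowerSemicontinuous
  upperSemicontinuous_upper := f.continuous.upperSemicontinuous
  frequently_lt_lower hc := (f.continuous.continuousAt.eventually_const_lt hc).frequently
  frequently_upper_lt hc := (f.continuous.continuousAt.eventually_lt_const hc).frequently

instance : Zero (HausdorffFun X) := ⟨ofContinuous 0⟩

instance : Neg (HausdorffFun X) where
  neg F :=
    { lower := -F.upper
      upper := -F.lower
      lower_le_upper := neg_le_neg F.lower_le_upper
      lowerSemicontinuous_lower := F.isNarrow.neg.lowerSemicontinuous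
      upperSemicontinuous_upper := F.isNarrow.neg.upperSemicontinuous
      frequently_lt_lower := fun hc =>
        (F.frequently_upper_lt (lt_neg_of_lt_neg hc)).mono fun _ => lt_neg_of_lt_neg
      frequently_upper_lt := fun hc =>
        (F.frequently_lt_lower (neg_lt_of_neg_lt hc)).mono fun _ => neg_lt_of_neg_lt }

theorem exists_between_add (F G : HausdorffFun X) :
    ∃ H : HausdorffFun X, F.lower + G.lower ≤ H.lower ∧ H.upper ≤ F.upper + G.upper :=
  exists_between (F.isNarrow.add G.isNarrow).lowerSemicontinuous
    (F.isNarrow.add G.isNarrow).upperSemicontinuous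
    (add_le_add F.lower_le_upper G.lower_le_upper)

/-- The sum `F ⊕ G`: the unique Hausdorff continuous function inside the pointwise interval sum,
which is itself in general too wide to be Hausdorff continuous. -/
noncomputable instance : Add (HausdorffFun X) :=
  ⟨fun F G => (exists_between_add F G).choose⟩

theorem lower_add_lower_le (F G : HausdorffFun X) : F.lower + G.lower ≤ (F + G).lower :=
  (exists_between_add F G).choose_spec.1

theorem upper_le_upper_add_upper (F G : HausdorffFun X) : (F + G).upper ≤ F.upper + G.upper :=
  (exists_between_add F G).choose_spec.2

theorem eq_add_iff {F G H : HausdorffFun X} :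
    H = F + G ↔ F.lower + G.lower ≤ H.lower ∧ H.upper ≤ F.upper + G.upper := by
  refine ⟨?_, fun h => ?_⟩
  · rintro rfl
    exact ⟨lower_add_lower_le F G, upper_le_upper_add_upper F G⟩
  · exact eq_of_isNarrow (F.isNarrow.add G.isNarrow) h.1 h.2
      (lower_add_lower_le F G) (upper_le_upper_add_upper F G)

protected theorem add_assoc (F G H : HausdorffFun X) : F + G + H = F + (G + H) :=
  eq_of_isNarrow ((F.isNarrow.add G.isNarrow).add H.isNarrow)
    ((add_le_add_left (lower_add_lower_le F G) _).trans (lower_add_lower_le (F + G) H))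
    ((upper_le_upper_add_upper (F + G) H).trans (add_le_add_left (upper_le_upper_add_upper F G) _))
    ((add_assoc F.lower _ _).trans_le <|
      (add_le_add_right (lower_add_lower_le G H) _).trans (lower_add_lower_le F (G + H)))
    (((upper_le_upper_add_upper F (G + H)).trans
      (add_le_add_right (upper_le_upper_add_upper G H) _)).trans_eq (add_assoc F.upper _ _).symm)

protected theorem zero_add (F : HausdorffFun X) : 0 + F = F :=
  (eq_add_iff.mpr ⟨(zero_add F.lower).le, (zero_add F.upper).ge⟩).symm

protected theorem add_comm (F G : HausdorffFun X) : F + G = G + F :=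
  eq_add_iff.mpr ⟨(add_comm G.lower _).trans_le (lower_add_lower_le F G),
    (upper_le_upper_add_upper F G).trans_eq (add_comm F.upper _)⟩

protected theorem neg_add_cancel (F : HausdorffFun X) : -F + F = 0 :=
  (eq_add_iff.mpr ⟨fun x => neg_add_nonpos_iff.mpr (F.lower_le_upper x),
    fun x => le_neg_add_iff_add_le.mpr ((add_zero _).trans_le (F.lower_le_upper x))⟩).symm

noncomputable instance : AddCommGroup (HausdorffFun X) where
  __ := AddGroup.ofLeftAxioms HausdorffFun.add_assoc HausdorffFun.zero_add
    HausdorffFun.neg_add_cancel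
  add_comm := HausdorffFun.add_comm

instance : IsOrderedAddMonoid (HausdorffFun X) where
  add_le_add_left F G h K :=
    le_of_isNarrow (F.isNarrow.add K.isNarrow) (upper_le_upper_add_upper F K)
      ((add_le_add_left h.1 _).trans (lower_add_lower_le G K))

variable (X) in
/-- The Hausdorff continuous functions that are bounded on bounded sets. -/
def boundedOnBounded [Bornology X] : AddSubgroup (HausdorffFun X) where
  carrier := {F | ∀ B : Set X, IsBounded B → BddBelow (F.lower '' B) ∧ BddAbove (F.upper '' B)}
  zero_mem' := fun B _ =>
    ⟨⟨0, forall_mem_image.mpr fun _ _ => le_rfl⟩, ⟨0, forall_mem_image.mpr fun _ _ => le_rfl⟩⟩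
  neg_mem' := by
    intro F hF B hB
    obtain ⟨⟨m, hm⟩, ⟨M, hM⟩⟩ := hF B hB
    rw [mem_lowerBounds, forall_mem_image] at hm
    rw [mem_upperBounds, forall_mem_image] at hM
    exact ⟨⟨-M, forall_mem_image.mpr fun x hx => neg_le_neg (hM hx)⟩,
      ⟨-m, forall_mem_image.mpr fun x hx => neg_le_neg (hm hx)⟩⟩
  add_mem' := by
    intro F G hF hG B hB
    obtain ⟨⟨m, hm⟩, ⟨M, hM⟩⟩ := hF B hB
    obtain ⟨⟨m', hm'⟩, ⟨M', hM'⟩⟩ := hG B hB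
    rw [mem_lowerBounds, forall_mem_image] at hm hm'
    rw [mem_upperBounds, forall_mem_image] at hM hM'
    exact ⟨⟨m + m', forall_mem_image.mpr fun x hx =>
        (add_le_add (hm hx) (hm' hx)).trans (lower_add_lower_le F G x)⟩,
      ⟨M + M', forall_mem_image.mpr fun x hx =>
        (upper_le_upper_add_upper F G x).trans (add_le_add (hM hx) (hM' hx))⟩⟩

end HausdorffFun

namespace HausdorffFun

theorem limsup_nhds_eq_upper {X : Type*} [TopologicalSpace X] (F : HausdorffFun X) {q : X → ℝ}
    (hlq : F.lower ≤ q) (hqu : q ≤ F.upper) (x : X) : limsup q (𝓝 x) = F.upper x := by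
  have hev {c : ℝ} (hc : F.upper x < c) : ∀ᶠ y in 𝓝 x, q y ≤ c :=
    (F.upperSemicontinuous_upper x c hc).mono fun y hy => (hqu y).trans (le_of_lt hy)
  refine le_antisymm (le_of_forall_gt_imp_ge_of_dense fun c hc =>
    limsup_le_of_le (isCoboundedUnder_le_nhds q x) (hev hc)) ?_
  exact le_of_forall_lt_imp_le_of_dense fun c hc => le_limsup_of_frequently_le
    ((F.frequently_lt_lower hc).mono fun y hy => (le_of_lt hy).trans (hlq y))
    (isBoundedUnder_of_eventually_le (hev (lt_add_one _)))

end HausdorffFun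

section BaireOperators

variable {n : ℕ} {Om : Set (Pt n)} {f u v : Pt n → ℝ}

theorem limsup_nhds_eq_sInf_sSup_ball {X : Type*} [PseudoMetricSpace X] {f : X → ℝ} {x : X}
    (hf : ∀ δ, BddAbove (f '' ball x δ)) :
    limsup f (𝓝 x) = sInf {a | ∃ δ : ℝ, 0 < δ ∧ a = sSup (f '' ball x δ)} := by
  rw [limsup_eq]
  refine csInf_eq_csInf_of_forall_exists_le (fun c hc => ?_) ?_
  · obtain ⟨δ, hδ, hball⟩ := eventually_nhds_iff_ball.mp hc
    exact ⟨_, ⟨δ, hδ, rfl⟩,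
      csSup_le ⟨_, mem_image_of_mem f (mem_ball_self hδ)⟩ (forall_mem_image.mpr hball)⟩
  · rintro _ ⟨δ, hδ, rfl⟩
    exact ⟨_, mem_of_superset (ball_mem_nhds x hδ)
      fun y hy => le_csSup (hf δ) (mem_image_of_mem f hy), le_rfl⟩

theorem image_inter_ball_eq_domRestrict_image (f : Pt n → ℝ) (x : Om) (δ : ℝ) :
    f '' {y | y ∈ Om ∧ ‖y - x‖ < δ ∧ y ∈ Om} = Om.domRestrict f '' ball x δ := by
  ext a
  constructor
  · rintro ⟨y, ⟨hy, hlt, _⟩, rfl⟩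
    exact ⟨⟨y, hy⟩, (dist_eq_norm y x.1).trans_lt hlt, rfl⟩
  · rintro ⟨y, hy, rfl⟩
    exact ⟨y, ⟨y.2, (dist_eq_norm y.1 x.1).symm.trans_lt hy, y.2⟩, rfl⟩

theorem shigh_eq_sInf (f : Pt n → ℝ) (x : Om) :
    Shigh Om Om f x = sInf {a | ∃ δ : ℝ, 0 < δ ∧ a = sSup (Om.domRestrict f '' ball x δ)} := by
  simp only [Shigh, image_inter_ball_eq_domRestrict_image]

theorem shigh_le_sSup_ball (f : Pt n → ℝ) (x : Om) {δ : ℝ} (hδ : 0 < δ) :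
    Shigh Om Om f x ≤ sSup (Om.domRestrict f '' ball x δ) := by
  rw [shigh_eq_sInf]
  refine csInf_le ⟨min (f x) 0, ?_⟩ ⟨δ, hδ, rfl⟩
  rintro _ ⟨r, hr, rfl⟩
  by_cases hbdd : BddAbove (Om.domRestrict f '' ball x r)
  · exact (min_le_left _ _).trans (le_csSup hbdd ⟨x, mem_ball_self hr, rfl⟩)
  · exact (min_le_right _ _).trans (Real.sSup_of_not_bddAbove hbdd).ge

theorem shigh_eq_limsup (hf : ∀ B : Set Om, IsBounded B → BddAbove (Om.domRestrict f '' B))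
    (x : Om) :
    Shigh Om Om f x = limsup (Om.domRestrict f) (𝓝 x) := by
  rw [shigh_eq_sInf, limsup_nhds_eq_sInf_sSup_ball fun δ => hf _ isBounded_ball]

theorem ilow_eq_neg_shigh_neg (f : Pt n → ℝ) (x : Pt n) :
    Ilow Om Om f x = -Shigh Om Om (-f) x := by
  have himage (s : Set (Pt n)) : (-f) '' s = -(f '' s) := by
    simp only [← image_neg_eq_neg, image_image, Pi.neg_apply]
  simp only [Ilow, Shigh, himage, Real.sSup_neg]
  rw [← Real.sSup_neg]
  congr 1
  ext a
  simp only [Set.mem_neg, mem_ofPred_eq, neg_inj]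

theorem LocBddOn.neg (hf : LocBddOn Om Om f) : LocBddOn Om Om (-f) := by
  simpa only [LocBddOn, Pi.neg_apply, abs_neg] using hf

theorem HContPair.neg (h : HContPair Om u v) : HContPair Om (-v) (-u) := by
  obtain ⟨⟨hu, hv, huv⟩, hcont⟩ := h
  refine ⟨⟨hv.neg, hu.neg, fun x hx => neg_le_neg (huv x hx)⟩, fun p q hp hq hpq x hx => ?_⟩
  obtain ⟨hlow, hhigh⟩ := hcont (-q) (-p) hq.neg hp.neg (fun y hy =>
    ⟨le_neg_of_le_neg (hpq y hy).2.2, neg_le_neg (hpq y hy).2.1,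
      neg_le_of_neg_le (hpq y hy).1⟩) x hx
  rw [ilow_eq_neg_shigh_neg, neg_neg] at hlow
  rw [ilow_eq_neg_shigh_neg, hhigh]
  exact ⟨rfl, neg_eq_iff_eq_neg.mp hlow⟩

theorem HContPair.le (h : HContPair Om u v) : Om.domRestrict u ≤ Om.domRestrict v :=
  fun x => h.1.2.2 x x.2

theorem HContPair.shigh_upper (h : HContPair Om u v) (x : Om) : Shigh Om Om v x = v x :=
  (h.2 v v h.1.2.1 h.1.2.1 (fun y hy => ⟨h.1.2.2 y hy, le_rfl, le_rfl⟩) x x.2).2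

theorem HContPair.shigh_lower (h : HContPair Om u v) (x : Om) : Shigh Om Om u x = v x :=
  (h.2 u u h.1.1 h.1.1 (fun y hy => ⟨le_rfl, le_rfl, h.1.2.2 y hy⟩) x x.2).2

/-- Real suprema of unbounded sets are `0`, so if `v` were unbounded above on a bounded set, then
large balls would give `S(v) ≤ 0`, hence `v ≤ 0` everywhere. -/
theorem HContPair.bddAbove_image_of_isBounded (h : HContPair Om u v) {B : Set Om}
    (hB : IsBounded B) : BddAbove (Om.domRestrict v '' B) := by
  by_contra hunbdd
  refine hunbdd ⟨0, forall_mem_image.mpr fun x _ => ?_⟩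
  obtain ⟨δ, hδ, hBδ⟩ := hB.subset_ball_lt 0 x
  calc v x = Shigh Om Om v x := (h.shigh_upper x).symm
    _ ≤ sSup (Om.domRestrict v '' ball x δ) := shigh_le_sSup_ball v x hδ
    _ = 0 := Real.sSup_of_not_bddAbove fun hbdd => hunbdd (hbdd.mono (image_mono hBδ))

theorem HContPair.bddBelow_image_of_isBounded (h : HContPair Om u v) {B : Set Om}
    (hB : IsBounded B) : BddBelow (Om.domRestrict u '' B) := by
  obtain ⟨M, hM⟩ := h.neg.bddAbove_image_of_isBounded hB
  rw [mem_upperBounds, forall_mem_image] at hM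
  exact ⟨-M, forall_mem_image.mpr fun x hx => neg_le_of_neg_le (hM hx)⟩

theorem HContPair.limsup_upper (h : HContPair Om u v) (x : Om) :
    limsup (Om.domRestrict v) (𝓝 x) = v x := by
  rw [← shigh_eq_limsup (fun _ => h.bddAbove_image_of_isBounded) x, h.shigh_upper]

theorem HContPair.limsup_lower (h : HContPair Om u v) (x : Om) :
    limsup (Om.domRestrict u) (𝓝 x) = v x := by
  rw [← h.shigh_lower, shigh_eq_limsup fun B hB => ?_]
  obtain ⟨M, hM⟩ := h.bddAbove_image_of_isBounded hB
  exact ⟨M, forall_mem_image.mpr fun y hy => (h.le y).trans (hM (mem_image_of_mem _ hy))⟩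

theorem HContPair.upperSemicontinuous (h : HContPair Om u v) :
    UpperSemicontinuous (Om.domRestrict v) := by
  have heq : (fun x => limsup (Om.domRestrict v) (𝓝 x)) = Om.domRestrict v := funext h.limsup_upper
  rw [← heq]
  refine upperSemicontinuous_limsup_nhds fun x => ?_
  obtain ⟨M, hM⟩ := h.bddAbove_image_of_isBounded (isBounded_ball (x := x) (r := 1))
  exact isBoundedUnder_of_eventually_le (a := M) <| mem_of_superset (ball_mem_nhds x one_pos)
    fun y hy => hM (mem_image_of_mem _ hy)

theorem HContPair.frequently_lt (h : HContPair Om u v) {x : Om} {c : ℝ} (hc : c < v x) :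
    ∃ᶠ y in 𝓝 x, c < Om.domRestrict u y :=
  frequently_lt_of_lt_limsup (isCoboundedUnder_le_nhds _ x) (h.limsup_lower x ▸ hc)

end BaireOperators

namespace HausdorffFun

variable {n : ℕ} {Om : Set (Pt n)} {q : Pt n → ℝ}

theorem shigh_eq_upper (F : boundedOnBounded Om)
    (hlq : F.1.lower ≤ Om.domRestrict q) (hqu : Om.domRestrict q ≤ F.1.upper) (x : Om) :
    Shigh Om Om q x = F.1.upper x := by
  rw [shigh_eq_limsup fun B hB => ?_, F.1.limsup_nhds_eq_upper hlq hqu]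
  obtain ⟨M, hM⟩ := (F.2 B hB).2
  exact ⟨M, forall_mem_image.mpr fun y hy => (hqu y).trans (hM (mem_image_of_mem _ hy))⟩

theorem locBddOn_of_between (F : boundedOnBounded Om)
    (hlq : F.1.lower ≤ Om.domRestrict q) (hqu : Om.domRestrict q ≤ F.1.upper) :
    LocBddOn Om Om q := by
  intro x hx
  obtain ⟨⟨m, hm⟩, ⟨M, hM⟩⟩ := F.2 (ball ⟨x, hx⟩ 1) isBounded_ball
  refine ⟨1, one_pos, max |m| |M| + 1, fun y hy hyx _ => lt_add_of_le_of_pos ?_ one_pos⟩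
  have hyB : (⟨y, hy⟩ : Om) ∈ ball ⟨x, hx⟩ 1 := (dist_eq_norm y x).trans_lt hyx
  exact abs_le_max_abs_abs ((hm (mem_image_of_mem _ hyB)).trans (hlq ⟨y, hy⟩))
    ((hqu ⟨y, hy⟩).trans (hM (mem_image_of_mem _ hyB)))

end HausdorffFun

namespace HContPair

variable {n : ℕ} {Om : Set (Pt n)} {u v u₁ v₁ u₂ v₂ : Pt n → ℝ}

/-- The Hausdorff continuous function on the subspace `Om` encoded by an H-continuous pair. By
`exists_toHausdorff_eq`, this identifies the H-continuous pairs, up to their values outside `Om`,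
with the ordered group of Hausdorff continuous functions bounded on bounded sets. -/
def toHausdorff (h : HContPair Om u v) : HausdorffFun.boundedOnBounded Om where
  val :=
    { lower := Om.domRestrict u
      upper := Om.domRestrict v
      lower_le_upper := h.le
      lowerSemicontinuous_lower := by
        simpa only [Function.comp_def, domRestrict_def, Pi.neg_apply, neg_neg] using
          continuous_neg.comp_upperSemicontinuous_antitone h.neg.upperSemicontinuous
            fun _ _ => neg_le_neg
      upperSemicontinuous_upper := h.upperSemicontinuous
      frequently_lt_lower := h.frequently_lt
      frequently_upper_lt := fun hc =>
        (h.neg.frequently_lt (neg_lt_neg hc)).mono fun _ => lt_of_neg_lt_neg }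
  property _ hB := ⟨h.bddBelow_image_of_isBounded hB, h.bddAbove_image_of_isBounded hB⟩

theorem of_domRestrict_eq (F : HausdorffFun.boundedOnBounded Om)
    (hu : Om.domRestrict u = F.1.lower) (hv : Om.domRestrict v = F.1.upper) :
    HContPair Om u v := by
  have huv : Om.domRestrict u ≤ Om.domRestrict v := hu ▸ hv ▸ F.1.lower_le_upper
  refine ⟨⟨HausdorffFun.locBddOn_of_between F hu.ge (huv.trans hv.le),
    HausdorffFun.locBddOn_of_between F (hu.ge.trans huv) hv.le, fun x hx => huv ⟨x, hx⟩⟩, ?_⟩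
  intro p q _ _ hpq x hx
  have hup : Om.domRestrict u ≤ Om.domRestrict p := fun y => (hpq y y.2).1
  have hpq' : Om.domRestrict p ≤ Om.domRestrict q := fun y => (hpq y y.2).2.1
  have hqv : Om.domRestrict q ≤ Om.domRestrict v := fun y => (hpq y y.2).2.2
  constructor
  · have hp : Shigh Om Om (-p) x = -F.1.lower ⟨x, hx⟩ :=
      HausdorffFun.shigh_eq_upper (-F) (q := -p) (neg_le_neg ((hpq'.trans hqv).trans hv.le))
        (neg_le_neg (hu.ge.trans hup)) ⟨x, hx⟩
    rw [ilow_eq_neg_shigh_neg, hp, neg_neg, ← hu, domRestrict_apply]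
  · have hq : Shigh Om Om q x = F.1.upper ⟨x, hx⟩ :=
      HausdorffFun.shigh_eq_upper F (hu.ge.trans (hup.trans hpq')) (hqv.trans hv.le) ⟨x, hx⟩
    rw [hq, ← hv, domRestrict_apply]

theorem exists_toHausdorff_eq (F : HausdorffFun.boundedOnBounded Om) :
    ∃ (p : (Pt n → ℝ) × (Pt n → ℝ)) (h : HContPair Om p.1 p.2), h.toHausdorff = F := by
  have hext (f : Om → ℝ) : Om.domRestrict (Function.extend Subtype.val f 0) = f :=
    Function.extend_comp Subtype.val_injective f 0
  exact ⟨(Function.extend Subtype.val F.1.lower 0, Function.extend Subtype.val F.1.upper 0),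
    of_domRestrict_eq F (hext _) (hext _), Subtype.ext (HausdorffFun.ext (hext _) (hext _))⟩

theorem pairLe_iff (h₁ : HContPair Om u₁ v₁) (h₂ : HContPair Om u₂ v₂) :
    PairLe Om (u₁, v₁) (u₂, v₂) ↔ h₁.toHausdorff ≤ h₂.toHausdorff :=
  ⟨fun h => ⟨fun x => (h x x.2).1, fun x => (h x x.2).2⟩,
    fun h x hx => ⟨h.1 ⟨x, hx⟩, h.2 ⟨x, hx⟩⟩⟩

theorem isOplus_iff (h₁ : HContPair Om u₁ v₁) (h₂ : HContPair Om u₂ v₂) (h : HContPair Om u v) :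
    IsOplus Om u₁ v₁ u₂ v₂ u v ↔ h.toHausdorff = h₁.toHausdorff + h₂.toHausdorff := by
  rw [Subtype.ext_iff]
  refine Iff.trans ⟨fun hsum => ?_, fun hsum => ?_⟩ HausdorffFun.eq_add_iff.symm
  · exact ⟨fun x => (hsum.2 x x.2).1, fun x => (hsum.2 x x.2).2.2⟩
  · exact ⟨h, fun x hx => ⟨hsum.1 ⟨x, hx⟩, h.le ⟨x, hx⟩, hsum.2 ⟨x, hx⟩⟩⟩

theorem isLUB_range_iff {a : ℕ → (Pt n → ℝ) × (Pt n → ℝ)}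
    (ha : ∀ k, HContPair Om (a k).1 (a k).2) (h : HContPair Om u v) :
    IsLUB (range fun k => (ha k).toHausdorff) h.toHausdorff ↔
      (∀ k, PairLe Om (a k) (u, v)) ∧ ∀ w : (Pt n → ℝ) × (Pt n → ℝ), HContPair Om w.1 w.2 →
        (∀ k, PairLe Om (a k) w) → PairLe Om (u, v) w := by
  refine and_congr (forall_mem_range.trans (forall_congr' fun k => (pairLe_iff (ha k) h).symm))
    ⟨fun hleast w hw hle => ?_, fun hleast W hW => ?_⟩
  · exact (pairLe_iff h hw).mpr <|
      hleast (forall_mem_range.mpr fun k => (pairLe_iff (ha k) hw).mp (hle k))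
  · obtain ⟨w, hw, rfl⟩ := exists_toHausdorff_eq W
    exact (pairLe_iff h hw).mp <|
      hleast w hw fun k => (pairLe_iff (ha k) hw).mpr (hW (mem_range_self k))

theorem isGLB_range_iff {b : ℕ → (Pt n → ℝ) × (Pt n → ℝ)}
    (hb : ∀ k, HContPair Om (b k).1 (b k).2) (h : HContPair Om u v) :
    IsGLB (range fun k => (hb k).toHausdorff) h.toHausdorff ↔
      (∀ k, PairLe Om (u, v) (b k)) ∧ ∀ w : (Pt n → ℝ) × (Pt n → ℝ), HContPair Om w.1 w.2 →
        (∀ k, PairLe Om w (b k)) → PairLe Om w (u, v) := by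
  refine and_congr (forall_mem_range.trans (forall_congr' fun k => (pairLe_iff h (hb k)).symm))
    ⟨fun hgreatest w hw hle => ?_, fun hgreatest W hW => ?_⟩
  · exact (pairLe_iff hw h).mpr <|
      hgreatest (forall_mem_range.mpr fun k => (pairLe_iff hw (hb k)).mp (hle k))
  · obtain ⟨w, hw, rfl⟩ := exists_toHausdorff_eq W
    exact (pairLe_iff hw h).mp <|
      hgreatest w hw fun k => (pairLe_iff hw (hb k)).mpr (hW (mem_range_self k))

theorem orderConvH_iff {F : ℕ → (Pt n → ℝ) × (Pt n → ℝ)} (hF : ∀ k, HContPair Om (F k).1 (F k).2)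
    (h : HContPair Om u v) :
    OrderConvH Om F (u, v) ↔ OrderConverges (fun k => (hF k).toHausdorff) h.toHausdorff := by
  constructor
  · rintro ⟨a, b, ha, hb, ha_mono, hb_anti, hab, ha_le, ha_least, hb_ge, hb_greatest⟩
    exact ⟨fun k => (ha k).toHausdorff, fun k => (hb k).toHausdorff,
      monotone_nat_of_le_succ fun k => (pairLe_iff _ _).mp (ha_mono k),
      antitone_nat_of_succ_le fun k => (pairLe_iff _ _).mp (hb_anti k),
      fun k => ⟨(pairLe_iff _ _).mp (hab k).1, (pairLe_iff _ _).mp (hab k).2⟩,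
      (isLUB_range_iff ha h).mpr ⟨ha_le, ha_least⟩,
      (isGLB_range_iff hb h).mpr ⟨hb_ge, hb_greatest⟩⟩
  · rintro ⟨A, B, hA_mono, hB_anti, hAB, hA_lub, hB_glb⟩
    choose a ha ha_eq using fun k => exists_toHausdorff_eq (A k)
    choose b hb hb_eq using fun k => exists_toHausdorff_eq (B k)
    obtain rfl : (fun k => (ha k).toHausdorff) = A := funext ha_eq
    obtain rfl : (fun k => (hb k).toHausdorff) = B := funext hb_eq
    obtain ⟨ha_le, ha_least⟩ := (isLUB_range_iff ha h).mp hA_lub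
    obtain ⟨hb_ge, hb_greatest⟩ := (isGLB_range_iff hb h).mp hB_glb
    exact ⟨a, b, ha, hb, fun k => (pairLe_iff _ _).mpr (hA_mono k.le_succ),
      fun k => (pairLe_iff _ _).mpr (hB_anti k.le_succ),
      fun k => ⟨(pairLe_iff _ _).mpr (hAB k).1, (pairLe_iff _ _).mpr (hAB k).2⟩,
      ha_le, ha_least, hb_ge, hb_greatest⟩

theorem exists_isOplus (h₁ : HContPair Om u₁ v₁) (h₂ : HContPair Om u₂ v₂) :
    ∃ pl pu, IsOplus Om u₁ v₁ u₂ v₂ pl pu := by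
  obtain ⟨p, hp, heq⟩ := exists_toHausdorff_eq (h₁.toHausdorff + h₂.toHausdorff)
  exact ⟨p.1, p.2, (isOplus_iff h₁ h₂ hp).mpr heq⟩

theorem of_continuousOn_of_between {f : Pt n → ℝ} (hf : ContinuousOn f Om)
    (h₁ : HContPair Om u₁ v₁) (h₂ : HContPair Om u₂ v₂)
    (h₁f : ∀ x ∈ Om, u₁ x ≤ f x) (hf₂ : ∀ x ∈ Om, f x ≤ v₂ x) : HContPair Om f f := by
  refine of_domRestrict_eq ⟨.ofContinuous ⟨Om.domRestrict f, hf.domRestrict⟩, fun B hB => ?_⟩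
    rfl rfl
  obtain ⟨m, hm⟩ := h₁.bddBelow_image_of_isBounded hB
  obtain ⟨M, hM⟩ := h₂.bddAbove_image_of_isBounded hB
  exact ⟨⟨m, forall_mem_image.mpr fun x hx => (hm (mem_image_of_mem _ hx)).trans (h₁f x x.2)⟩,
    ⟨M, forall_mem_image.mpr fun x hx => (hf₂ x x.2).trans (hM (mem_image_of_mem _ hx))⟩⟩

end HContPair

theorem OrderConvH.hContPair_of_continuousOn {n : ℕ} {Om : Set (Pt n)} {f : ℕ → Pt n → ℝ}
    {p : (Pt n → ℝ) × (Pt n → ℝ)} (hconv : OrderConvH Om (fun k => (f k, f k)) p)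
    (hf : ∀ k, ContinuousOn (f k) Om) (k : ℕ) : HContPair Om (f k) (f k) := by
  obtain ⟨a, b, ha, hb, -, -, hab, -⟩ := hconv
  exact .of_continuousOn_of_between (hf k) (ha k) (hb k)
    (fun x hx => ((hab k).1 x hx).1) fun x hx => ((hab k).2 x hx).2

theorem isOplus_add_of_hContPair {n : ℕ} {Om : Set (Pt n)} {f g : Pt n → ℝ}
    (hf : HContPair Om f f) (hg : HContPair Om g g) :
    IsOplus Om f f g g (fun x => f x + g x) fun x => f x + g x := by
  obtain ⟨pl, pu, hp, hsum⟩ := hf.exists_isOplus hg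
  have hpl : Om.domRestrict (f + g) = Om.domRestrict pl :=
    funext fun x => (hsum x x.2).1.antisymm ((hsum x x.2).2.1.trans (hsum x x.2).2.2)
  have hpu : Om.domRestrict (f + g) = Om.domRestrict pu :=
    funext fun x => ((hsum x x.2).1.trans (hsum x x.2).2.1).antisymm (hsum x x.2).2.2
  exact ⟨.of_domRestrict_eq hp.toHausdorff hpl hpu, fun _ _ => ⟨le_rfl, le_rfl, le_rfl⟩⟩

theorem stmt19_general {n : ℕ} (Om : Set (Pt n)) (u₁ v₁ u₂ v₂ : Pt n → ℝ)
    (h₁ : HContPair Om u₁ v₁) (h₂ : HContPair Om u₂ v₂) (F G P : ℕ → (Pt n → ℝ) × (Pt n → ℝ))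
    (hF : ∀ k, HContPair Om (F k).1 (F k).2) (hG : ∀ k, HContPair Om (G k).1 (G k).2)
    (hP : ∀ k, IsOplus Om (F k).1 (F k).2 (G k).1 (G k).2 (P k).1 (P k).2)
    (hconvF : OrderConvH Om F (u₁, v₁)) (hconvG : OrderConvH Om G (u₂, v₂)) :
    (∃ pl pu, IsOplus Om u₁ v₁ u₂ v₂ pl pu) ∧
      ∀ pl pu, IsOplus Om u₁ v₁ u₂ v₂ pl pu → OrderConvH Om P (pl, pu) := by
  refine ⟨h₁.exists_isOplus h₂, fun pl pu hsum => ?_⟩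
  have hP_eq : (fun k => (hP k).1.toHausdorff) =
      (fun k => (hF k).toHausdorff) + fun k => (hG k).toHausdorff :=
    funext fun k => ((hF k).isOplus_iff (hG k) (hP k).1).mp (hP k)
  rw [hsum.1.orderConvH_iff fun k => (hP k).1, hP_eq, (h₁.isOplus_iff h₂ hsum.1).mp hsum]
  exact ((h₁.orderConvH_iff hF).mp hconvF).add ((h₂.orderConvH_iff hG).mp hconvG)

theorem stmt19 {n : ℕ} (Om : Set (Pt n)) (hOm : IsOpen Om)
    (u₁ v₁ u₂ v₂ : Pt n → ℝ)
    (h₁ : HContPair Om u₁ v₁) (h₂ : HContPair Om u₂ v₂)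
    (f g : ℕ → Pt n → ℝ)
    (hcf : ∀ k, ContinuousOn (f k) Om) (hcg : ∀ k, ContinuousOn (g k) Om)
    (hCf : OrderCauchySeq Om f) (hCg : OrderCauchySeq Om g)
    (hconvf : OrderConvH Om (fun k => (f k, f k)) (u₁, v₁))
    (hconvg : OrderConvH Om (fun k => (g k, g k)) (u₂, v₂)) :
    (∃ pl pu : Pt n → ℝ, IsOplus Om u₁ v₁ u₂ v₂ pl pu) ∧
    ∀ pl pu : Pt n → ℝ, IsOplus Om u₁ v₁ u₂ v₂ pl pu →
      OrderConvH Om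
        (fun k => ((fun x => f k x + g k x), (fun x => f k x + g k x)))
        (pl, pu) := by
  have hf := hconvf.hContPair_of_continuousOn hcf
  have hg := hconvg.hContPair_of_continuousOn hcg
  exact stmt19_general Om u₁ v₁ u₂ v₂ h₁ h₂ _ _ _ hf hg
    (fun k => isOplus_add_of_hContPair (hf k) (hg k)) hconvf hconvg
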